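/- arXiv:2403.11998 — 7 statements merged into one kernel-verified Lean document; each statement's English description precedes it below -/
import Mathlib

section
/- For every finite nonempty set D of pairwise distinct functions from ℕ to ℕ, there exists a finite set S ⊆ ℕ with |S| ≤ |D| − 1 that separates D; equivalently, the restriction map f ↦ f|_S is injective on D. -/
/-- For every finite nonempty set `D` of pairwise distinct functions
`ℕ → ℕ`, there exists a finite set `S ⊆ ℕ` with `|S| ≤ |D| - 1` that separates `D`,
i.e. for any two distinct `f, g ∈ D` there is `x ∈ S` with `f x ≠ g x`
(equivalently, the restriction map `f ↦ f|_S` is injective on `D`). -/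
theorem exists_small_separating_set (D : Finset (ℕ → ℕ)) (hD : D.Nonempty) :
    ∃ S : Finset ℕ, S.card ≤ D.card - 1 ∧
      ∀ f ∈ D, ∀ g ∈ D, f ≠ g → ∃ x ∈ S, f x ≠ g x := by
  induction hD using Finset.Nonempty.cons_induction with
  | singleton a =>
    refine ⟨∅, by simp, ?_⟩
    intro f hf g hg hne
    rw [Finset.mem_singleton] at hf hg
    exact absurd (hf.trans hg.symm) hne
  | cons a D ha hD ih =>
    obtain ⟨S, hS, hsep⟩ := ih
    have hpos := hD.card_pos
    -- it suffices to separate the new function `a` from the old ones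
    suffices h : ∃ T : Finset ℕ, S ⊆ T ∧ T.card ≤ S.card + 1 ∧
        ∀ g ∈ D, ∃ x ∈ T, a x ≠ g x by
      obtain ⟨T, hST, hT, haT⟩ := h
      refine ⟨T, by rw [Finset.card_cons]; omega, ?_⟩
      intro f hf g hg hne
      rw [Finset.mem_cons] at hf hg
      rcases hf with rfl | hf
      · rcases hg with rfl | hg
        · exact absurd rfl hne
        · exact haT g hg
      · rcases hg with rfl | hg
        · obtain ⟨x, hx, h⟩ := haT f hf
          exact ⟨x, hx, h.symm⟩
        · obtain ⟨x, hx, h⟩ := hsep f hf g hg hne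
          exact ⟨x, hST hx, h⟩
    by_cases h : ∃ g ∈ D, ∀ x ∈ S, a x = g x
    · obtain ⟨g, hg, hag⟩ := h
      have hne : a ≠ g := fun e => ha (e ▸ hg)
      obtain ⟨y, hy⟩ := Function.ne_iff.mp hne
      refine ⟨insert y S, Finset.subset_insert _ _, Finset.card_insert_le _ _, ?_⟩
      intro k hk
      by_cases hkg : g = k
      · subst hkg
        exact ⟨y, Finset.mem_insert_self _ _, hy⟩
      · obtain ⟨x, hx, hxk⟩ := hsep g hg k hk hkg
        exact ⟨x, Finset.mem_insert_of_mem hx, by rw [hag x hx]; exact hxk⟩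
    · push Not at h
      exact ⟨S, Finset.Subset.refl _, Nat.le_succ _, h⟩
end

section
/- For every finite nonempty set D of pairwise distinct functions from ℕ to ℕ, there exists an adaptive strategy that identifies the members of D in at most |D| − 1 interactions; moreover the strategy can be chosen non-interactive, i.e., its probing inputs do not depend on the answers received. -/
/-- The answer trace produced by interacting with `f : ℕ → ℕ` using the adaptive
strategy `q : List ℕ → ℕ` (mapping the answers received so far to the next probing
input): `trace q f 0 = []` and `trace q f (j+1) = trace q f j ++ [f (q (trace q f j))]`. -/
def trace (q : List ℕ → ℕ) (f : ℕ → ℕ) : ℕ → List ℕ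
  | 0 => []
  | j + 1 => trace q f j ++ [f (q (trace q f j))]

lemma trace_eq_map (xs : ℕ → ℕ) (f : ℕ → ℕ) (m : ℕ) :
    trace (fun l => xs l.length) f m = (List.range m).map (fun j => f (xs j)) := by
  induction m with
  | zero => simp [trace]
  | succ k ih => simp [trace, ih, List.range_succ]

lemma exists_separating (D : Finset (ℕ → ℕ)) (hD : D.Nonempty) :
    ∃ S : Finset ℕ, S.card + 1 ≤ D.card ∧
      ∀ f ∈ D, ∀ g ∈ D, (∀ x ∈ S, f x = g x) → f = g := by
  classical
  induction hD using Finset.Nonempty.cons_induction with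
  | singleton a => exact ⟨∅, by simp, by simp⟩
  | cons a D ha hD ih =>
    obtain ⟨S, hc, hS⟩ := ih
    by_cases h : ∃ h ∈ D, ∀ x ∈ S, a x = h x
    · obtain ⟨h, hh, hag⟩ := h
      have hne : a ≠ h := fun e => ha (e ▸ hh)
      obtain ⟨x, hx⟩ := Function.ne_iff.mp hne
      have key : ∀ g ∈ D, (∀ y ∈ insert x S, a y = g y) → False := by
        intro g hg hy
        have : h = g := hS h hh g hg fun y hyS =>
          (hag y hyS).symm.trans (hy y (Finset.mem_insert_of_mem hyS))
        exact hx (this ▸ hy x (Finset.mem_insert_self x S))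
      refine ⟨insert x S, ?_, ?_⟩
      · have := Finset.card_insert_le x S
        rw [Finset.card_cons]
        omega
      · intro f hf g hg hfg
        rcases Finset.mem_cons.mp hf with rfl | hf' <;> rcases Finset.mem_cons.mp hg with rfl | hg'
        · rfl
        · exact (key g hg' hfg).elim
        · exact (key f hf' fun y hy => (hfg y hy).symm).elim
        · exact hS f hf' g hg' fun y hy => hfg y (Finset.mem_insert_of_mem hy)
    · refine ⟨S, by rw [Finset.card_cons]; omega, ?_⟩
      intro f hf g hg hfg
      rcases Finset.mem_cons.mp hf with rfl | hf' <;> rcases Finset.mem_cons.mp hg with rfl | hg'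
      · rfl
      · exact (h ⟨g, hg', hfg⟩).elim
      · exact (h ⟨f, hf', fun y hy => (hfg y hy).symm⟩).elim
      · exact hS f hf' g hg' hfg

/-- For every finite nonempty set `D` of pairwise distinct functions
`ℕ → ℕ`, there exists an adaptive strategy identifying the members of `D` in at most
`|D| - 1` interactions (the trace map `f ↦ T_f(m)` is injective on `D`); moreover the
strategy can be chosen non-interactive: its probing inputs depend only on how many
answers have been received, not on the answers themselves. -/
theorem exists_noninteractive_identifying_strategy (D : Finset (ℕ → ℕ)) (hD : D.Nonempty) :
    ∃ (q : List ℕ → ℕ) (xs : ℕ → ℕ) (m : ℕ), m ≤ D.card - 1 ∧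
      (∀ l : List ℕ, q l = xs l.length) ∧
      Set.InjOn (fun f => trace q f m) (D : Set (ℕ → ℕ)) := by
  obtain ⟨S, hc, hS⟩ := exists_separating D hD
  refine ⟨fun l => S.toList.getD l.length 0, fun j => S.toList.getD j 0, S.card, by omega,
    fun _ => rfl, ?_⟩
  intro f hf g hg hfg
  have hfg' : trace (fun l => (fun j => S.toList.getD j 0) l.length) f S.card =
    trace (fun l => (fun j => S.toList.getD j 0) l.length) g S.card := hfg
  rw [trace_eq_map (fun j => S.toList.getD j 0), trace_eq_map (fun j => S.toList.getD j 0),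
    List.map_inj_left] at hfg'
  refine hS f hf g hg fun x hx => ?_
  obtain ⟨j, hj, rfl⟩ := List.mem_iff_getElem.mp (Finset.mem_toList.mpr hx)
  have := hfg' j (List.mem_range.mpr (by simpa using hj))
  simpa only [List.getD_eq_getElem _ _ hj] using this
end

section
/- For every integer L ≥ 2 and every adaptive strategy, if the strategy identifies the members of the family {ξ_1, …, ξ_L} in m interactions, then m ≥ L − 1; that is, even interactive interrogators need at least L − 1 probing interactions in the worst case for this family. -/
/-- `ξ_i : ℕ → ℕ` with `ξ_i n = 0` if `n = i` and `ξ_i n = n` otherwise. -/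
def xi (i : ℕ) : ℕ → ℕ := fun n => if n = i then 0 else n

theorem trace_eq_id (q : List ℕ → ℕ) (i m : ℕ)
    (h : ∀ j < m, q (trace q id j) ≠ i) : trace q (xi i) m = trace q id m := by
  induction m with
  | zero => rfl
  | succ k ih =>
    have hk := ih (fun j hj => h j (by omega))
    have := h k (by omega)
    simp [trace, hk, xi, this]

/-- For every integer `L ≥ 2` and every adaptive strategy `q`, if the
strategy identifies the members of the family `{ξ_1, …, ξ_L}` in `m` interactions
(i.e. `f ↦ T_f(m)` is injective on this family), then `m ≥ L - 1`. -/
theorem interactive_lower_bound (L : ℕ) (hL : 2 ≤ L) (q : List ℕ → ℕ) (m : ℕ)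
    (hid : Set.InjOn (fun f => trace q f m) (xi '' Set.Icc 1 L)) :
    L - 1 ≤ m := by
  by_contra hlt
  have hcard : 1 < (Finset.Icc 1 L \ (Finset.range m).image (fun j => q (trace q id j))).card := by
    have h1 := Finset.le_card_sdiff ((Finset.range m).image (fun j => q (trace q id j)))
      (Finset.Icc 1 L)
    have h2 : ((Finset.range m).image (fun j => q (trace q id j))).card ≤ m := by
      simpa using Finset.card_image_le (s := Finset.range m) (f := fun j => q (trace q id j))
    simp only [Nat.card_Icc] at h1
    omega
  obtain ⟨a, ha, b, hb, hab⟩ := Finset.one_lt_card.mp hcard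
  simp only [Finset.mem_sdiff, Finset.mem_Icc, Finset.mem_image, Finset.mem_range,
    not_exists, not_and] at ha hb
  have hta := trace_eq_id q a m ha.2
  have htb := trace_eq_id q b m hb.2
  have heq : xi a = xi b :=
    hid ⟨a, ha.1, rfl⟩ ⟨b, hb.1, rfl⟩ (hta.trans htb.symm)
  have := congrFun heq a
  simp [xi, hab] at this
  omega
end

section
/- For every integer n ≥ 2, there exists a set D of n pairwise distinct functions from ℕ to ℕ such that every adaptive strategy that identifies the members of D requires at least n − 1 interactions; combined with the upper bound of |D| − 1 interactions, this shows the worst-case number of probing interactions needed to identify a function from a set D is exactly |D| − 1 for both interactive and non-interactive interrogators. -/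
theorem trace_eq_zero_trace (q : List ℕ → ℕ) (f : ℕ → ℕ) (m : ℕ)
    (h : ∀ j < m, f (q (trace q (fun _ => 0) j)) = 0) :
    trace q f m = trace q (fun _ => 0) m := by
  induction m with
  | zero => rfl
  | succ k ih =>
    have h1 := ih (fun j hj => h j (by omega))
    simp only [trace, h1, h k (by omega)]

theorem trace_length_eq (q : List ℕ → ℕ) (f : ℕ → ℕ) (m : ℕ) : (trace q f m).length = m := by
  induction m with
  | zero => rfl
  | succ k ih => simp [trace, ih]

theorem agree_of_trace_eq (f g : ℕ → ℕ) (m : ℕ)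
    (h : trace List.length f m = trace List.length g m) : ∀ x < m, f x = g x := by
  induction m with
  | zero => intro x hx; omega
  | succ k ih =>
    simp only [trace, trace_length_eq] at h
    obtain ⟨h1, h2⟩ := List.append_inj' h rfl
    intro x hx
    rcases Nat.lt_succ_iff_lt_or_eq.mp hx with hx | rfl
    · exact ih h1 x hx
    · simpa using h2

/-- The indicator function of the point `i`. -/
def pointFun (i : ℕ) : ℕ → ℕ := fun x => if x = i then 1 else 0

theorem pointFun_injective : Function.Injective pointFun := by
  intro i j h
  have := congrFun h i
  simpa [pointFun] using this

/-- For every integer `n ≥ 2` there exists a set `D` of `n` pairwise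
distinct functions `ℕ → ℕ` such that every adaptive strategy identifying the members
of `D` requires at least `n - 1` interactions; moreover (the matching upper bound)
some non-interactive strategy identifies the members of `D` in `n - 1` interactions,
so the worst-case number of probing interactions is exactly `|D| - 1` for both
interactive and non-interactive interrogators. -/
theorem worst_case_interactions (n : ℕ) (hn : 2 ≤ n) :
    ∃ D : Finset (ℕ → ℕ), D.card = n ∧
      (∀ (q : List ℕ → ℕ) (m : ℕ),
        Set.InjOn (fun f => trace q f m) (D : Set (ℕ → ℕ)) → n - 1 ≤ m) ∧
      (∃ (q : List ℕ → ℕ) (xs : ℕ → ℕ),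
        (∀ l : List ℕ, q l = xs l.length) ∧
        Set.InjOn (fun f => trace q f (n - 1)) (D : Set (ℕ → ℕ))) := by
  classical
  refine ⟨(Finset.range n).image pointFun, ?_, ?_, List.length, id, fun _ => rfl, ?_⟩
  · rw [Finset.card_image_of_injective _ pointFun_injective, Finset.card_range]
  · intro q m hinj
    by_contra hlt
    let Q : Finset ℕ := (Finset.range m).image (fun j => q (trace q (fun _ => 0) j))
    have hQ : Q.card ≤ m := by
      simpa using (Finset.card_image_le (s := Finset.range m)
        (f := fun j => q (trace q (fun _ => 0) j)))
    have hS : 1 < (Finset.range n \ Q).card := by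
      have := Finset.le_card_sdiff Q (Finset.range n)
      rw [Finset.card_range] at this
      omega
    obtain ⟨a, ha, b, hb, hab⟩ := Finset.one_lt_card.mp hS
    have key : ∀ c ∈ Finset.range n \ Q,
        trace q (pointFun c) m = trace q (fun _ => 0) m := by
      intro c hc
      apply trace_eq_zero_trace
      intro j hj
      have hne : q (trace q (fun _ => 0) j) ≠ c := by
        rintro rfl
        exact (Finset.mem_sdiff.mp hc).2
          (Finset.mem_image.mpr ⟨j, Finset.mem_range.mpr hj, rfl⟩)
      simp [pointFun, hne]
    apply hab
    apply pointFun_injective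
    apply hinj
    · exact Finset.mem_coe.mpr (Finset.mem_image_of_mem _ (Finset.mem_sdiff.mp ha).1)
    · exact Finset.mem_coe.mpr (Finset.mem_image_of_mem _ (Finset.mem_sdiff.mp hb).1)
    · exact (key a ha).trans (key b hb).symm
  · intro f hf g hg h
    obtain ⟨i, hi, rfl⟩ := Finset.mem_image.mp (Finset.mem_coe.mp hf)
    obtain ⟨j, hj, rfl⟩ := Finset.mem_image.mp (Finset.mem_coe.mp hg)
    rw [Finset.mem_range] at hi hj
    have hag := agree_of_trace_eq _ _ _ h
    by_contra hne
    have hij : i ≠ j := fun e => hne (by rw [e])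
    by_cases h1 : i < n - 1
    · have := hag i h1
      simp [pointFun, hij] at this
    · have := hag j (by omega)
      simp [pointFun, hij.symm] at this
end

section
/- The map m ↦ g_m is injective on the parameter set {1, …, M}^{k−1}: if g_m = g_{m'} as functions List (Fin k) → Finset (Fin k), then m = m'. In particular the function set D_L contains exactly M^{k−1} pairwise distinct members. -/
/-- The word `a_1^n a_2^{n + m_2} ⋯ a_k^{n + m_k}` over the alphabet `Fin k`
(where, for a valid parameter tuple, `m` vanishes on the first token). -/
def word (k : ℕ) (m : Fin k → ℕ) (n : ℕ) : List (Fin k) :=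
  (List.finRange k).flatMap fun i => List.replicate (n + m i) i

/-- A valid parameter tuple `(m_2, …, m_k)`: the entry of the first token is `0`
and every other entry lies in `{1, …, M}`. -/
def validParam (k M : ℕ) (m : Fin k → ℕ) : Prop :=
  (∀ i : Fin k, (i : ℕ) = 0 → m i = 0) ∧
  (∀ i : Fin k, 1 ≤ (i : ℕ) → 1 ≤ m i ∧ m i ≤ M)

/-- The language `L_m = { a_1^n a_2^{n+m_2} ⋯ a_k^{n+m_k} | n ≥ 1 }`. -/
def lang (k : ℕ) (m : Fin k → ℕ) : Set (List (Fin k)) :=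
  {w | ∃ n, 1 ≤ n ∧ w = word k m n}

/-- The generative function `g_m`, mapping a string `s` to the set of tokens `t`
such that `s ++ [t]` is a prefix of some word of `L_m` (so `g_m s = ∅` when `s`
admits no valid continuation). -/
noncomputable def gen (k : ℕ) (m : Fin k → ℕ) (s : List (Fin k)) : Finset (Fin k) :=
  @Finset.filter _ (fun t => ∃ n, 1 ≤ n ∧ (s ++ [t]) <+: word k m n)
    (Classical.decPred _) Finset.univ

theorem count_word_aux (k : ℕ) (m : Fin k → ℕ) (n : ℕ) (i : Fin k) :
    (word k m n).count i = n + m i := by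
  unfold word
  rw [List.count_flatMap]
  have : (List.map (List.count i ∘ fun i => List.replicate (n + m i) i) (List.finRange k)).sum
      = ∑ j : Fin k, (List.replicate (n + m j) j).count i := by
    rw [← List.ofFn_eq_map, List.sum_ofFn]
    rfl
  rw [this]
  simp [List.count_replicate]

theorem word_prefix_one (j : ℕ) (m m' : Fin (j+2) → ℕ) (h0 : m 0 = 0) (n : ℕ)
    (hn : 1 ≤ n) (h : word (j+2) m 1 <+: word (j+2) m' n) : n = 1 := by
  by_contra hne
  obtain ⟨p, rfl⟩ : ∃ p, n = p + 2 := ⟨n - 2, by omega⟩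
  unfold word at h
  rw [List.finRange_succ, List.finRange_succ] at h
  simp only [List.map_cons, List.flatMap_cons, h0] at h
  rw [show p + 2 + m' 0 = (p + m' 0) + 1 + 1 by omega,
    show 1 + m (Fin.succ 0) = m (Fin.succ 0) + 1 by omega] at h
  simp [List.replicate_succ, List.cons_prefix_cons] at h

theorem gen_eq_prefix (j : ℕ) (m m' : Fin (j+2) → ℕ) (h0 : m 0 = 0)
    (h : gen (j+2) m = gen (j+2) m') : word (j+2) m 1 <+: word (j+2) m' 1 := by
  have hne : word (j+2) m 1 ≠ [] := by
    intro hw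
    have := count_word_aux (j+2) m 1 0
    rw [hw] at this
    simp at this
    omega
  have hd := List.dropLast_append_getLast hne
  have hmem : (word (j+2) m 1).getLast hne ∈ gen (j+2) m (word (j+2) m 1).dropLast := by
    simp only [gen, Finset.mem_filter, Finset.mem_univ, true_and]
    exact ⟨1, le_rfl, by rw [hd]⟩
  rw [h] at hmem
  simp only [gen, Finset.mem_filter, Finset.mem_univ, true_and] at hmem
  obtain ⟨n, hn, hp⟩ := hmem
  rw [hd] at hp
  have := word_prefix_one j m m' h0 n hn hp
  rwa [this] at hp

theorem gen_injOn_aux (j M : ℕ) :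
    Set.InjOn (gen (j+2)) {m | validParam (j+2) M m} := by
  intro m hm m' hm' h
  have h1 := gen_eq_prefix j m m' (hm.1 0 rfl) h
  have h2 := gen_eq_prefix j m' m (hm'.1 0 rfl) h.symm
  funext i
  have e := h1.sublist.antisymm h2.sublist
  have := congrArg (List.count i) e
  rw [count_word_aux, count_word_aux] at this
  omega

theorem validParam_ncard (j M : ℕ) :
    {m | validParam (j+2) M m}.ncard = M ^ (j + 1) := by
  have : {m | validParam (j+2) M m} =
      ↑(Fintype.piFinset (fun i : Fin (j+2) => if i = 0 then {0} else Finset.Icc 1 M)) := by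
    ext m
    simp only [Set.mem_setOf_eq, validParam, Finset.mem_coe, Fintype.mem_piFinset]
    constructor
    · rintro ⟨h1, h2⟩ i
      split_ifs with hi
      · simp [h1 i (by simp [hi])]
      · have : (i : ℕ) ≠ 0 := fun h => hi (Fin.ext h)
        simpa using h2 i (by omega)
    · intro h
      refine ⟨fun i hi => ?_, fun i hi => ?_⟩
      · have := h i
        rw [if_pos (Fin.ext hi)] at this
        simpa using this
      · have := h i
        rw [if_neg (by rintro rfl; simp at hi)] at this
        simpa using this
  rw [this, Set.ncard_coe_finset, Fintype.card_piFinset, Fin.prod_univ_succ]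
  simp [Fin.succ_ne_zero]

/-- The map `m ↦ g_m` is injective on the parameter set
`{1, …, M}^{k-1}`: if `g_m = g_{m'}` as functions then `m = m'`. In particular the
function set `D_L = { g_m }` contains exactly `M^(k-1)` pairwise distinct members. -/
theorem gen_injective (k M : ℕ) (hk : 3 ≤ k) (hM : 1 ≤ M) :
    Set.InjOn (gen k) {m | validParam k M m} ∧
    (gen k '' {m | validParam k M m}).ncard = M ^ (k - 1) := by
  obtain ⟨j, rfl⟩ : ∃ j, k = j + 2 := ⟨k - 2, by omega⟩
  refine ⟨gen_injOn_aux j M, ?_⟩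
  rw [Set.ncard_image_of_injOn (gen_injOn_aux j M), validParam_ncard]
  rfl
end

section
/- If a string p ∈ List (Fin k) has [a_1, a_2] as a prefix and p is a prefix of some word of L_m, then p is a prefix of the n = 1 word s_m. Consequently, for every such p the set of allowed continuations g_m(p) contains at most one token, and g_m(p) = ∅ if and only if p = s_m. -/
theorem n_eq_one (k M : ℕ) (m : Fin k → ℕ) (hm : validParam k M m) (p : List (Fin k))
    (a b : Fin k) (ha : (a : ℕ) = 0) (hb : (b : ℕ) = 1) (hpre : [a, b] <+: p)
    (n : ℕ) (hn : 1 ≤ n) (hp : p <+: word k m n) : n = 1 := by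
  have h := hpre.trans hp
  by_contra hne
  obtain ⟨k', rfl⟩ : ∃ k', k = k' + 1 := ⟨k - 1, by have := a.2; omega⟩
  obtain ⟨n', rfl⟩ : ∃ n', n = n' + 2 := ⟨n - 2, by omega⟩
  have h0 : m 0 = 0 := hm.1 0 rfl
  unfold word at h
  rw [List.finRange_succ, List.flatMap_cons, h0, Nat.add_zero (n' + 2), List.replicate_succ,
    List.replicate_succ, List.cons_append, List.cons_append, List.cons_prefix_cons,
    List.cons_prefix_cons] at h
  have h1 := congrArg Fin.val h.2.1
  simp [hb] at h1

/-- If a string `p` has `[a_1, a_2]` as a prefix and `p` is a prefix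
of some word of `L_m`, then `p` is a prefix of the `n = 1` word `s_m = word k m 1`.
Consequently, for every such `p`, the set of allowed continuations `g_m p` contains
at most one token, and `g_m p = ∅` if and only if `p = s_m`. -/
theorem prefix_of_first_word (k M : ℕ) (hk : 3 ≤ k) (hM : 1 ≤ M)
    (m : Fin k → ℕ) (hm : validParam k M m) (p : List (Fin k))
    (hpre : [(⟨0, by omega⟩ : Fin k), (⟨1, by omega⟩ : Fin k)] <+: p)
    (hp : ∃ n, 1 ≤ n ∧ p <+: word k m n) :
    p <+: word k m 1 ∧ (gen k m p).card ≤ 1 ∧ (gen k m p = ∅ ↔ p = word k m 1) := by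
  have key : ∀ q : List (Fin k), p <+: q → (∃ n, 1 ≤ n ∧ q <+: word k m n) →
      q <+: word k m 1 := by
    rintro q hq ⟨n, hn, h⟩
    have := n_eq_one k M m hm q _ _ rfl rfl (hpre.trans hq) n hn h
    rwa [this] at h
  have hp1 := key p (List.prefix_refl p) hp
  have hmem : ∀ t, t ∈ gen k m p ↔ (p ++ [t]) <+: word k m 1 := by
    intro t
    unfold gen
    simp only [Finset.mem_filter, Finset.mem_univ, true_and]
    exact ⟨fun h => key _ (List.prefix_append _ _) h, fun h => ⟨1, le_rfl, h⟩⟩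
  obtain ⟨r, hr⟩ := hp1
  have hmem2 : ∀ t, t ∈ gen k m p ↔ [t] <+: r := by
    intro t
    rw [hmem, ← hr, List.prefix_append_right_inj]
  refine ⟨⟨r, hr⟩, ?_, ?_⟩
  · rw [Finset.card_le_one]
    intro a ha b hb
    rw [hmem2] at ha hb
    cases r with
    | nil => simp at ha
    | cons c r =>
      rw [List.cons_prefix_cons] at ha hb
      rw [ha.1, hb.1]
  · rw [← hr, Finset.eq_empty_iff_forall_notMem]
    cases r with
    | nil => simp [hmem2]
    | cons c r =>
      constructor
      · intro h
        exact absurd ((hmem2 c).2 (by simp)) (h c)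
      · intro h
        simp at h
end

section
/- For all integers k ≥ 3 and M ≥ 1, there exists an adaptive strategy over probing strings that identifies the members of D_L in at most (M+1)(k−1) interactions: starting from the probing string [a_1, a_2] and repeatedly appending the unique allowed token returned by g_m until ∅ is returned, the strategy recovers s_m, which uniquely determines m; the number of evaluations of g_m is linear in M·k. -/
/-- Answer traces of an adaptive strategy `q` over probing strings interacting with
`g : List (Fin k) → Finset (Fin k)`: `T_g(0) = []`,
`T_g(j+1) = T_g(j) ++ [g (q (T_g(j)))]`. -/
def traceS (k : ℕ) (q : List (Finset (Fin k)) → List (Fin k))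
    (g : List (Fin k) → Finset (Fin k)) : ℕ → List (Finset (Fin k))
  | 0 => []
  | j + 1 => traceS k q g j ++ [g (q (traceS k q g j))]

theorem word_succ (k : ℕ) (m : Fin (k + 2) → ℕ) (h0 : m 0 = 0) (n : ℕ) :
    ∃ r, word (k + 2) m n = List.replicate n 0 ++ (List.replicate (n + m 1) 1 ++ r) := by
  unfold word
  rw [List.finRange_succ, List.finRange_succ]
  simp only [List.map_cons, List.flatMap_cons, h0, Nat.add_zero]
  exact ⟨_, rfl⟩

theorem word_one_prefix (k : ℕ) (m : Fin (k + 2) → ℕ) (h0 : m 0 = 0) :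
    [0, 1] <+: word (k + 2) m 1 := by
  obtain ⟨r, hr⟩ := word_succ k m h0 1
  rw [hr, Nat.add_comm 1 (m 1), List.replicate_succ]
  exact ⟨_, rfl⟩

theorem eq_one_of_prefix (k : ℕ) (m : Fin (k + 2) → ℕ) (h0 : m 0 = 0) (n : ℕ) (hn : 1 ≤ n)
    (h : [0, 1] <+: word (k + 2) m n) : n = 1 := by
  obtain ⟨r, hr⟩ := word_succ k m h0 n
  rw [hr] at h
  match n, hn with
  | 1, _ => rfl
  | n + 2, _ =>
    obtain ⟨u, hu⟩ := h
    simp [List.replicate_succ] at hu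

theorem word_length (k M : ℕ) (m : Fin (k + 2) → ℕ) (hm : validParam (k + 2) M m) :
    (word (k + 2) m 1).length ≤ (M + 1) * (k + 1) + 1 := by
  have h : (word (k + 2) m 1).length = ∑ i, (1 + m i) := by
    unfold word
    rw [List.length_flatMap]
    simp only [List.length_replicate]
    rw [← List.ofFn_eq_map, List.sum_ofFn]
  rw [h, Fin.sum_univ_succ, hm.1 0 rfl]
  have : ∑ i : Fin (k + 1), (1 + m i.succ) ≤ ∑ _i : Fin (k + 1), (M + 1) := by
    apply Finset.sum_le_sum
    intro i _
    have := (hm.2 i.succ (by simp)).2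
    omega
  simp only [Finset.sum_const, Finset.card_univ, Fintype.card_fin, smul_eq_mul] at this
  rw [Nat.mul_comm (M + 1)]
  omega

theorem word_inj (k : ℕ) (m m' : Fin k → ℕ) (h : word k m 1 = word k m' 1) : m = m' := by
  have hc : ∀ (m : Fin k → ℕ) (i : Fin k), (word k m 1).count i = 1 + m i := by
    intro m i
    unfold word
    rw [List.count_flatMap, ← List.ofFn_eq_map, List.sum_ofFn]
    simp [List.count_replicate]
  funext i
  have := hc m i
  rw [h, hc m' i] at this
  omega

theorem gen_take (k : ℕ) (m : Fin (k + 2) → ℕ) (h0 : m 0 = 0) (j : ℕ) :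
    (gen (k + 2) m ((word (k + 2) m 1).take (j + 2))).toList
      = ((word (k + 2) m 1)[j + 2]?).toList := by
  have hp := word_one_prefix k m h0
  set w := word (k + 2) m 1 with hw
  have hmem : ∀ t, t ∈ gen (k + 2) m (w.take (j + 2)) ↔ w[j + 2]? = some t := by
    intro t
    unfold gen
    simp only [Finset.mem_filter, Finset.mem_univ, true_and]
    constructor
    · rintro ⟨n, hn, h⟩
      have h2 : [0, 1] <+: w.take (j + 2) := by
        rw [List.prefix_take_iff]
        exact ⟨hp, by simp⟩
      have : n = 1 := eq_one_of_prefix k m h0 n hn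
        (h2.trans ((List.prefix_append _ _).trans h))
      subst this
      rw [← hw] at h
      have hl := h.length_le
      simp only [List.length_append, List.length_take, List.length_singleton] at hl
      have hlen : (w.take (j + 2)).length = j + 2 := by
        rw [List.length_take]; omega
      obtain ⟨u, hu⟩ := h
      conv_lhs => rw [← hu]
      simp [List.getElem?_append, hlen]
    · intro h
      refine ⟨1, le_rfl, ?_⟩
      rw [← hw]
      have := List.take_add_one (l := w) (i := j + 2)
      rw [h] at this
      simp only [Option.toList_some] at this
      rw [← this]
      exact List.take_prefix _ _
  cases hx : w[j + 2]? with
  | none =>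
    have : gen (k + 2) m (w.take (j + 2)) = ∅ := by
      ext t; rw [hmem, hx]; simp
    rw [this]; simp
  | some a =>
    have : gen (k + 2) m (w.take (j + 2)) = {a} := by
      ext t; rw [hmem, hx]; simp [eq_comm]
    rw [this]; simp

/-- The strategy: start from `[a_1, a_2]` and append the returned tokens. -/
noncomputable def strat (k : ℕ) (T : List (Finset (Fin (k + 2)))) : List (Fin (k + 2)) :=
  [0, 1] ++ T.flatMap Finset.toList

theorem strat_trace (k : ℕ) (m : Fin (k + 2) → ℕ) (h0 : m 0 = 0) (j : ℕ) :
    strat k (traceS (k + 2) (strat k) (gen (k + 2) m) j) = (word (k + 2) m 1).take (j + 2) := by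
  induction j with
  | zero =>
    simpa [traceS, strat] using List.prefix_iff_eq_take.1 (word_one_prefix k m h0)
  | succ j ih =>
    have : strat k (traceS (k + 2) (strat k) (gen (k + 2) m) (j + 1)) =
        strat k (traceS (k + 2) (strat k) (gen (k + 2) m) j) ++
          (gen (k + 2) m (strat k (traceS (k + 2) (strat k) (gen (k + 2) m) j))).toList := by
      conv_lhs => rw [traceS, strat, List.flatMap_append, ← List.append_assoc]
      simp only [List.flatMap_cons, List.flatMap_nil, List.append_nil]
      rfl
    rw [this, ih, gen_take k m h0]
    exact (List.take_add_one (l := word (k + 2) m 1) (i := j + 2)).symm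

/-- For all integers `k ≥ 3` and `M ≥ 1`, there exists an adaptive
strategy over probing strings that identifies the members of
`D_L = { g_m | m ∈ {1,…,M}^{k-1} }` in at most `(M+1)(k-1)` interactions:
the map `g ↦ T_g(j)` is injective on `D_L` for some `j ≤ (M+1)(k-1)`. -/
theorem interactive_identifies_languages (k M : ℕ) (hk : 3 ≤ k) (hM : 1 ≤ M) :
    ∃ (q : List (Finset (Fin k)) → List (Fin k)) (j : ℕ),
      j ≤ (M + 1) * (k - 1) ∧
      Set.InjOn (fun g => traceS k q g j) {g | ∃ m, validParam k M m ∧ g = gen k m} := by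
  obtain ⟨k, rfl⟩ : ∃ k', k = k' + 2 := ⟨k - 2, by omega⟩
  refine ⟨strat k, (M + 1) * (k + 2 - 1), le_rfl, ?_⟩
  rintro _ ⟨m, hm, rfl⟩ _ ⟨m', hm', rfl⟩ h
  have h1 := congrArg (strat k) h
  simp only [] at h1
  have hl := word_length k M m hm
  have hl' := word_length k M m' hm'
  have e : k + 2 - 1 = k + 1 := rfl
  rw [strat_trace k m (hm.1 0 rfl), strat_trace k m' (hm'.1 0 rfl),
    List.take_of_length_le (by rw [e]; omega), List.take_of_length_le (by rw [e]; omega)] at h1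
  rw [word_inj _ _ _ h1]
end
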